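/- For every finite nonempty subset W of the vertices of the infinite hexagonal grid G∞, there exists a finite subset W' of vertices of G∞ with |W'| = |W|, |𝒩(W')| ≤ |𝒩(W)|, and such that W' has no bad rows in any of the three directions, i.e. for each i ∈ {1,2,3} the index set I_i(W') = {ind_i(w) : w ∈ W'} is a set of consecutive integers. -/

import Mathlib

/-- Adjacency of the infinite hexagonal grid `G∞` in brick-wall coordinates on `ℤ × ℤ`:
`(x,y)` and `(x',y')` are adjacent iff `y' = y` and `|x' - x| = 1`, or
`x' = x` and `|y' - y| = 1` and `x + min y y'` is even. -/
def hexAdj (v w : ℤ × ℤ) : Prop :=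
  (v.2 = w.2 ∧ (v.1 - w.1).natAbs = 1) ∨
  (v.1 = w.1 ∧ (v.2 - w.2).natAbs = 1 ∧ Even (v.1 + min v.2 w.2))

/-- The neighborhood `𝒩(W)`: vertices not in `W` adjacent to some vertex of `W`. -/
def hexNbhd (W : Set (ℤ × ℤ)) : Set (ℤ × ℤ) :=
  {v | v ∉ W ∧ ∃ w ∈ W, hexAdj v w}

/-- The boundary `ℬ(W)`: vertices of `W` adjacent to some vertex not in `W`. -/
def hexBdry (W : Set (ℤ × ℤ)) : Set (ℤ × ℤ) :=
  {v | v ∈ W ∧ ∃ w, w ∉ W ∧ hexAdj v w}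

/-- The outgoing edges `ℰ(W)`, encoded as ordered pairs `(v, w)` with `v ∈ W`, `w ∉ W`
and `v` adjacent to `w`; each edge with exactly one endpoint in `W` corresponds to
exactly one such pair. -/
def hexCutEdges (W : Set (ℤ × ℤ)) : Set ((ℤ × ℤ) × (ℤ × ℤ)) :=
  {p | p.1 ∈ W ∧ p.2 ∉ W ∧ hexAdj p.1 p.2}

/-- The hexagonal cell `C(a,b)`, with vertex set `{(2a+b+i, b+j) : i ∈ {0,1,2}, j ∈ {0,1}}`. -/
def hexCell (a b : ℤ) : Set (ℤ × ℤ) :=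
  {(2*a+b, b), (2*a+b+1, b), (2*a+b+2, b),
   (2*a+b, b+1), (2*a+b+1, b+1), (2*a+b+2, b+1)}

/-- The vertex set `V(G_r)` of the finite hexagonal grid of radius `r`: the union of the
cells `C(a,b)` with `(|a| + |b| + |a+b|)/2 ≤ r - 1`. -/
def gridVerts (r : ℕ) : Set (ℤ × ℤ) :=
  {v | ∃ a b : ℤ, a.natAbs + b.natAbs + (a+b).natAbs ≤ 2*(r-1) ∧ v ∈ hexCell a b}

/-- `𝒩_{G_r}(W)`: vertices of `V(G_r) \ W` adjacent to some vertex of `W`. -/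
def hexNbhdIn (r : ℕ) (W : Set (ℤ × ℤ)) : Set (ℤ × ℤ) :=
  {v | v ∈ gridVerts r ∧ v ∉ W ∧ ∃ w ∈ W, hexAdj v w}

/-- `ℬ_{G_r}(W)`: vertices of `W` adjacent to some vertex of `V(G_r) \ W`. -/
def hexBdryIn (r : ℕ) (W : Set (ℤ × ℤ)) : Set (ℤ × ℤ) :=
  {v | v ∈ W ∧ ∃ w, w ∈ gridVerts r ∧ w ∉ W ∧ hexAdj v w}

/-- `ℰ_{G_r}(W)`: the edges of `G_r` with exactly one endpoint in `W ⊆ V(G_r)`, encoded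
as ordered pairs `(v, w)` with `v ∈ W`, `w ∈ V(G_r) \ W`, `v` adjacent to `w`. -/
def hexCutEdgesIn (r : ℕ) (W : Set (ℤ × ℤ)) : Set ((ℤ × ℤ) × (ℤ × ℤ)) :=
  {p | p.1 ∈ W ∧ p.2 ∈ gridVerts r ∧ p.2 ∉ W ∧ hexAdj p.1 p.2}

/-- The index `ind_i(x,y)` of the direction-`i` row containing `(x,y)`
(directions numbered `0, 1, 2` for the paper's `1, 2, 3`):
`ind_1 = y`, `ind_2 = ⌊(y-x)/2⌋`, `ind_3 = ⌊(x+y)/2⌋`. -/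
def rowInd : Fin 3 → ℤ × ℤ → ℤ
  | 0, v => v.2
  | 1, v => Int.fdiv (v.2 - v.1) 2
  | 2, v => Int.fdiv (v.1 + v.2) 2

/-- The linear parameter `p_i` along direction-`i` rows:
`p_1 = x`, `p_2 = x + y`, `p_3 = x - y`. -/
def rowParam : Fin 3 → ℤ × ℤ → ℤ
  | 0, v => v.1
  | 1, v => v.1 + v.2
  | 2, v => v.1 - v.2

/-- A set of integers is consecutive if it contains every integer between any two of
its elements. -/
def ConsecutiveSet (S : Set ℤ) : Prop :=
  ∀ a ∈ S, ∀ b ∈ S, ∀ k : ℤ, a ≤ k → k ≤ b → k ∈ S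

/-- `v` is an outermost neighbor of `W` for direction `i`: the direction-`i` row of `v`
is gray, and the parameter of `v` is `m - 1` or `M + 1`, where `m` and `M` are the
minimum and maximum of the parameter over `W` intersected with that row. -/
def IsOutermostNeighbor (W : Set (ℤ × ℤ)) (i : Fin 3) (v : ℤ × ℤ) : Prop :=
  (rowParam i v + 1 ∈ rowParam i '' {w ∈ W | rowInd i w = rowInd i v} ∧
    ∀ q ∈ rowParam i '' {w ∈ W | rowInd i w = rowInd i v}, rowParam i v + 1 ≤ q) ∨
  (rowParam i v - 1 ∈ rowParam i '' {w ∈ W | rowInd i w = rowInd i v} ∧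
    ∀ q ∈ rowParam i '' {w ∈ W | rowInd i w = rowInd i v}, q ≤ rowParam i v - 1)

/-!
Suppose row `k` of some direction is empty while rows on both sides of it are gray. The part `U` of
`W` above this row and the part `L` below it have no edge between them and no common neighbor, so
`|𝒩(U ∪ L)| = |𝒩(U)| + |𝒩(L)|`, and translating `U` one row towards `L` does not increase `|𝒩|`.
Two shortest translations do this, and their mean is perpendicular to the row in the honeycomb
drawing, so one of them strictly decreases the sum of the squared distances between all pairs of
points. Hence a set that minimizes this energy, among those with as many vertices as `W` and no
more neighbors, has no bad rows.
-/

open scoped Pointwise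

theorem disjoint_of_le_of_lt {α β : Type*} [Preorder β] {s t : Finset α} {f : α → β} {b : β}
    (hs : ∀ a ∈ s, b ≤ f a) (ht : ∀ a ∈ t, f a < b) : Disjoint s t :=
  Finset.disjoint_left.2 fun a has hat => (hs a has).not_gt (ht a hat)

theorem ConsecutiveSet.of_no_gap {S : Set ℤ}
    (h : ∀ k ∉ S, ∀ a ∈ S, a < k → ∀ b ∈ S, ¬k < b) : ConsecutiveSet S := by
  intro a ha b hb k hak hkb
  by_contra hk
  exact h k hk a ha (hak.lt_of_ne (ne_of_mem_of_not_mem ha hk))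
    b hb (hkb.lt_of_ne' (ne_of_mem_of_not_mem hb hk))

theorem rowInd_zero (v : ℤ × ℤ) : rowInd 0 v = v.2 := rfl

theorem rowInd_one (v : ℤ × ℤ) : rowInd 1 v = (v.2 - v.1) / 2 :=
  Int.fdiv_eq_ediv_of_nonneg _ zero_le_two

theorem rowInd_two (v : ℤ × ℤ) : rowInd 2 v = (v.1 + v.2) / 2 :=
  Int.fdiv_eq_ediv_of_nonneg _ zero_le_two

theorem hexAdj.abs_rowInd_sub_le_one {v w : ℤ × ℤ} (h : hexAdj v w) (i : Fin 3) :
    |rowInd i v - rowInd i w| ≤ 1 := by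
  rw [abs_le]
  match i with
  | 0 | 1 | 2 =>
    simp only [hexAdj, rowInd_zero, rowInd_one, rowInd_two] at h ⊢
    omega

theorem hexAdj.eq_or_rowInd_eq {v u w : ℤ × ℤ} (hu : hexAdj v u) (hw : hexAdj v w) (i : Fin 3) :
    u = w ∨ rowInd i u = rowInd i v ∨ rowInd i w = rowInd i v := by
  match i with
  | 0 | 1 | 2 =>
    simp only [hexAdj, Int.even_iff, Prod.ext_iff, rowInd_zero, rowInd_one, rowInd_two] at hu hw ⊢
    omega

section Neighborhood

variable {U L : Set (ℤ × ℤ)} {t : ℤ × ℤ} {i : Fin 3} {k : ℤ}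

theorem hexAdj_add_left_iff (ht : Even (t.1 + t.2)) (v w : ℤ × ℤ) :
    hexAdj (t + v) (t + w) ↔ hexAdj v w := by
  simp only [hexAdj, Int.even_iff, Prod.fst_add, Prod.snd_add] at ht ⊢
  omega

theorem hexNbhd_vadd (ht : Even (t.1 + t.2)) (U : Set (ℤ × ℤ)) :
    hexNbhd (t +ᵥ U) = t +ᵥ hexNbhd U := by
  ext v
  obtain ⟨v, rfl⟩ : ∃ u, t +ᵥ u = v := ⟨-t +ᵥ v, vadd_neg_vadd t v⟩
  rw [Set.vadd_mem_vadd_set_iff]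
  refine and_congr (not_congr Set.vadd_mem_vadd_set_iff) (Set.exists_mem_image.trans ?_)
  simp only [vadd_eq_add, hexAdj_add_left_iff ht]

theorem finite_hexNbhd (hU : U.Finite) : (hexNbhd U).Finite := by
  refine ((Set.finite_Icc (-1) 1).add hU).subset ?_
  rintro v ⟨-, w, hw, hvw⟩
  refine Set.mem_add.2 ⟨v - w, ?_, w, hw, sub_add_cancel v w⟩
  simp only [hexAdj] at hvw
  simp only [Set.mem_Icc, Prod.le_def, Prod.fst_sub, Prod.snd_sub, Prod.fst_neg, Prod.snd_neg,
    Prod.fst_one, Prod.snd_one]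
  omega

theorem hexNbhd_union_subset (U L : Set (ℤ × ℤ)) :
    hexNbhd (U ∪ L) ⊆ hexNbhd U ∪ hexNbhd L := by
  rintro v ⟨hv, w, hw | hw, hvw⟩
  · exact .inl ⟨fun h => hv (.inl h), w, hw, hvw⟩
  · exact .inr ⟨fun h => hv (.inr h), w, hw, hvw⟩

theorem ncard_hexNbhd_union_le (hU : U.Finite) (hL : L.Finite) :
    (hexNbhd (U ∪ L)).ncard ≤ (hexNbhd U).ncard + (hexNbhd L).ncard :=
  (Set.ncard_le_ncard (hexNbhd_union_subset U L)
    ((finite_hexNbhd hU).union (finite_hexNbhd hL))).trans (Set.ncard_union_le _ _)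

theorem hexNbhd_union_of_rowInd_lt (hU : ∀ u ∈ U, k < rowInd i u)
    (hL : ∀ l ∈ L, rowInd i l < k) : hexNbhd (U ∪ L) = hexNbhd U ∪ hexNbhd L := by
  have hfar {u l} (hu : u ∈ U) (hl : l ∈ L) : ¬|rowInd i u - rowInd i l| ≤ 1 := by
    have hku := hU u hu
    have hlk := hL l hl
    rw [abs_le]
    omega
  refine (hexNbhd_union_subset U L).antisymm ?_
  rintro v (⟨hvU, u, hu, hvu⟩ | ⟨hvL, l, hl, hvl⟩)
  · refine ⟨?_, u, .inl hu, hvu⟩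
    rintro (h | hvL)
    · exact hvU h
    · refine hfar hu hvL ?_
      rw [abs_sub_comm]
      exact hvu.abs_rowInd_sub_le_one i
  · refine ⟨?_, l, .inr hl, hvl⟩
    rintro (hvU | h)
    · exact hfar hvU hl (hvl.abs_rowInd_sub_le_one i)
    · exact hvL h

theorem disjoint_hexNbhd_of_rowInd_lt (hU : ∀ u ∈ U, k < rowInd i u)
    (hL : ∀ l ∈ L, rowInd i l < k) : Disjoint (hexNbhd U) (hexNbhd L) := by
  rw [Set.disjoint_left]
  rintro v ⟨-, u, hu, hvu⟩ ⟨-, l, hl, hvl⟩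
  have hku := hU u hu
  have hlk := hL l hl
  have hu_near := abs_le.1 (hvu.abs_rowInd_sub_le_one i)
  have hl_near := abs_le.1 (hvl.abs_rowInd_sub_le_one i)
  rcases hvu.eq_or_rowInd_eq hvl i with rfl | h | h <;> omega

theorem ncard_hexNbhd_union_of_rowInd_lt (hUfin : U.Finite) (hLfin : L.Finite)
    (hU : ∀ u ∈ U, k < rowInd i u) (hL : ∀ l ∈ L, rowInd i l < k) :
    (hexNbhd (U ∪ L)).ncard = (hexNbhd U).ncard + (hexNbhd L).ncard := by
  rw [hexNbhd_union_of_rowInd_lt hU hL, Set.ncard_union_eq (disjoint_hexNbhd_of_rowInd_lt hU hL)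
    (finite_hexNbhd hUfin) (finite_hexNbhd hLfin)]

theorem ncard_hexNbhd_vadd_union_le (hUfin : U.Finite) (hLfin : L.Finite)
    (hU : ∀ u ∈ U, k < rowInd i u) (hL : ∀ l ∈ L, rowInd i l < k) (ht : Even (t.1 + t.2)) :
    (hexNbhd ((t +ᵥ U) ∪ L)).ncard ≤ (hexNbhd (U ∪ L)).ncard :=
  calc (hexNbhd ((t +ᵥ U) ∪ L)).ncard
      ≤ (hexNbhd (t +ᵥ U)).ncard + (hexNbhd L).ncard :=
        ncard_hexNbhd_union_le hUfin.vadd_set hLfin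
    _ = (hexNbhd U).ncard + (hexNbhd L).ncard := by rw [hexNbhd_vadd ht, Set.ncard_vadd_set]
    _ = (hexNbhd (U ∪ L)).ncard := (ncard_hexNbhd_union_of_rowInd_lt hUfin hLfin hU hL).symm

end Neighborhood

section PairEnergy

theorem sum_vadd_finset {G α M : Type*} [AddGroup G] [AddAction G α] [DecidableEq α]
    [AddCommMonoid M] (f : α → M) (t : G) (U : Finset α) :
    ∑ v ∈ t +ᵥ U, f v = ∑ u ∈ U, f (t +ᵥ u) :=
  Finset.sum_image (AddAction.injective t).injOn

variable {G M : Type*} [AddCommGroup G] [AddCommMonoid M]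

/-- The energy of a finite point set under the pair potential `f`: the sum of `f (p - q)` over all
ordered pairs of its points, the diagonal included. -/
def pairEnergy (f : G → M) (U : Finset G) : M := ∑ p ∈ U, ∑ q ∈ U, f (p - q)

variable [DecidableEq G]

theorem pairEnergy_vadd (f : G → M) (t : G) (U : Finset G) :
    pairEnergy f (t +ᵥ U) = pairEnergy f U := by
  simp only [pairEnergy, sum_vadd_finset, vadd_eq_add, add_sub_add_left_eq_sub]

theorem pairEnergy_union {f : G → M} (hf : f.Even) {U L : Finset G} (h : Disjoint U L) :
    pairEnergy f (U ∪ L) =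
      pairEnergy f U + pairEnergy f L + 2 • ∑ u ∈ U, ∑ l ∈ L, f (u - l) := by
  have hswap : ∑ l ∈ L, ∑ u ∈ U, f (l - u) = ∑ u ∈ U, ∑ l ∈ L, f (u - l) := by
    rw [Finset.sum_comm]
    refine Finset.sum_congr rfl fun u _ => Finset.sum_congr rfl fun l _ => ?_
    rw [← hf, neg_sub]
  simp only [pairEnergy, Finset.sum_union h, Finset.sum_add_distrib, hswap, two_nsmul]
  abel

end PairEnergy

section Compression

/-- Four thirds of the squared Euclidean length of the grid translation by `d`, in the honeycomb
drawing with unit edges. It takes values in `ℕ` so that sets of minimal energy exist. -/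
def hexNormSq (d : ℤ × ℤ) : ℕ := d.1.natAbs ^ 2 + 3 * d.2.natAbs ^ 2

theorem even_hexNormSq : hexNormSq.Even := fun d => by
  simp only [hexNormSq, Prod.fst_neg, Prod.snd_neg, Int.natAbs_neg]

theorem natCast_hexNormSq (d : ℤ × ℤ) : (hexNormSq d : ℤ) = d.1 ^ 2 + 3 * d.2 ^ 2 := by
  simp only [hexNormSq, Nat.cast_add, Nat.cast_mul, Nat.cast_pow, Int.natCast_natAbs, sq_abs,
    Nat.cast_ofNat]

/-- The two shortest grid translations that lower the direction-`i` row index by one. -/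
def rowDescent : Fin 3 → Fin 2 → ℤ × ℤ
  | 0, 0 => (1, -1)
  | 0, 1 => (-1, -1)
  | 1, 0 => (1, -1)
  | 1, 1 => (2, 0)
  | 2, 0 => (-1, -1)
  | 2, 1 => (-2, 0)

theorem even_rowDescent (i : Fin 3) (j : Fin 2) :
    Even ((rowDescent i j).1 + (rowDescent i j).2) := by
  decide +revert

theorem rowInd_rowDescent_add (i : Fin 3) (j : Fin 2) (v : ℤ × ℤ) :
    rowInd i (rowDescent i j + v) = rowInd i v - 1 := by
  match i, j with
  | 0, 0 | 0, 1 | 1, 0 | 1, 1 | 2, 0 | 2, 1 =>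
    simp only [rowDescent, rowInd_zero, rowInd_one, rowInd_two, Prod.fst_add, Prod.snd_add]
    omega

theorem sum_hexNormSq_rowDescent_add_sub_lt {i : Fin 3} {u l : ℤ × ℤ}
    (h : rowInd i l + 1 < rowInd i u) :
    ∑ j, hexNormSq (rowDescent i j + u - l) < ∑ _j : Fin 2, hexNormSq (u - l) := by
  zify
  simp only [natCast_hexNormSq, Fin.sum_univ_two, Prod.fst_add, Prod.snd_add, Prod.fst_sub,
    Prod.snd_sub]
  -- The squares of `u - l` cancel, leaving an inequality linear in `u - l`.
  match i with
  | 0 =>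
    simp only [rowDescent, rowInd_zero] at h ⊢
    linarith
  | 1 =>
    have hsep : l.2 - l.1 + 3 ≤ u.2 - u.1 := by rw [rowInd_one, rowInd_one] at h; omega
    simp only [rowDescent]
    linarith
  | 2 =>
    have hsep : l.1 + l.2 + 3 ≤ u.1 + u.2 := by rw [rowInd_two, rowInd_two] at h; omega
    simp only [rowDescent]
    linarith

variable {U L : Finset (ℤ × ℤ)} {i : Fin 3} {k : ℤ}

theorem exists_sum_hexNormSq_rowDescent_lt (hUne : U.Nonempty) (hLne : L.Nonempty)
    (hU : ∀ u ∈ U, k < rowInd i u) (hL : ∀ l ∈ L, rowInd i l < k) :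
    ∃ j, ∑ u ∈ U, ∑ l ∈ L, hexNormSq (rowDescent i j + u - l) <
      ∑ u ∈ U, ∑ l ∈ L, hexNormSq (u - l) := by
  suffices ∑ j, ∑ u ∈ U, ∑ l ∈ L, hexNormSq (rowDescent i j + u - l) <
      ∑ _j : Fin 2, ∑ u ∈ U, ∑ l ∈ L, hexNormSq (u - l) by
    simpa only [Finset.mem_univ, true_and] using Finset.exists_lt_of_sum_lt this
  simp only [Finset.sum_comm (s := Finset.univ)]
  refine Finset.sum_lt_sum_of_nonempty hUne fun u hu =>
    Finset.sum_lt_sum_of_nonempty hLne fun l hl => sum_hexNormSq_rowDescent_add_sub_lt ?_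
  exact (Int.add_one_le_of_lt (hL l hl)).trans_lt (hU u hu)

theorem exists_translate_pairEnergy_lt (hUne : U.Nonempty) (hLne : L.Nonempty)
    (hU : ∀ u ∈ U, k < rowInd i u) (hL : ∀ l ∈ L, rowInd i l < k) :
    ∃ t : ℤ × ℤ, Even (t.1 + t.2) ∧ ((t +ᵥ U) ∪ L).card = (U ∪ L).card ∧
      pairEnergy hexNormSq ((t +ᵥ U) ∪ L) < pairEnergy hexNormSq (U ∪ L) := by
  obtain ⟨j, hj⟩ := exists_sum_hexNormSq_rowDescent_lt hUne hLne hU hL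
  have hdisj : Disjoint U L := disjoint_of_le_of_lt (fun u hu => (hU u hu).le) hL
  have hdisj_vadd : Disjoint (rowDescent i j +ᵥ U) L := by
    refine disjoint_of_le_of_lt (f := rowInd i) (b := k) (fun v hv => ?_) hL
    obtain ⟨u, hu, rfl⟩ := Finset.mem_vadd_finset.1 hv
    rw [vadd_eq_add, rowInd_rowDescent_add]
    exact Int.le_sub_one_of_lt (hU u hu)
  refine ⟨rowDescent i j, even_rowDescent i j, ?_, ?_⟩
  · rw [Finset.card_union_of_disjoint hdisj_vadd, Finset.card_union_of_disjoint hdisj,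
      Finset.card_vadd_finset]
  · rw [pairEnergy_union even_hexNormSq hdisj_vadd, pairEnergy_union even_hexNormSq hdisj,
      pairEnergy_vadd, sum_vadd_finset]
    simpa only [vadd_eq_add, add_lt_add_iff_left, smul_eq_mul, Nat.mul_lt_mul_left two_pos] using hj

theorem exists_pairEnergy_lt_of_gap {W : Finset (ℤ × ℤ)} {a b : ℤ × ℤ} (ha : a ∈ W) (hb : b ∈ W)
    (hak : rowInd i a < k) (hkb : k < rowInd i b) (hk : ∀ w ∈ W, rowInd i w ≠ k) :
    ∃ W' : Finset (ℤ × ℤ), W'.card = W.card ∧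
      (hexNbhd (W' : Set (ℤ × ℤ))).ncard ≤ (hexNbhd (W : Set (ℤ × ℤ))).ncard ∧
      pairEnergy hexNormSq W' < pairEnergy hexNormSq W := by
  let U := {w ∈ W | k < rowInd i w}
  let L := {w ∈ W | rowInd i w < k}
  have hU : ∀ u ∈ U, k < rowInd i u := fun u hu => (Finset.mem_filter.1 hu).2
  have hL : ∀ l ∈ L, rowInd i l < k := fun l hl => (Finset.mem_filter.1 hl).2
  have hW : U ∪ L = W := by
    rw [← Finset.filter_or, Finset.filter_true_of_mem fun w hw => (hk w hw).lt_or_gt.symm]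
  obtain ⟨t, ht, hcard, henergy⟩ := exists_translate_pairEnergy_lt
    ⟨b, Finset.mem_filter.2 ⟨hb, hkb⟩⟩ ⟨a, Finset.mem_filter.2 ⟨ha, hak⟩⟩ hU hL
  rw [← hW]
  refine ⟨(t +ᵥ U) ∪ L, hcard, ?_, henergy⟩
  rw [Finset.coe_union, Finset.coe_union, Finset.coe_vadd_finset]
  exact ncard_hexNbhd_vadd_union_le U.finite_toSet L.finite_toSet hU hL ht

end Compression

/-- Every finite nonempty vertex set `W` can be replaced by a set `W'` of the same
cardinality, with at most as many neighbor vertices, and with no bad rows in any of the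
three directions (each index set `I_i(W')` is a set of consecutive integers). -/
theorem eliminate_bad_rows (W : Set (ℤ × ℤ)) (hW : W.Finite) (hne : W.Nonempty) :
    ∃ W' : Set (ℤ × ℤ), W'.Finite ∧ W'.ncard = W.ncard ∧
      (hexNbhd W').ncard ≤ (hexNbhd W).ncard ∧
      ∀ i : Fin 3, ConsecutiveSet (rowInd i '' W') := by
  lift W to Finset (ℤ × ℤ) using hW
  obtain ⟨V, ⟨hcard, hnbhd⟩, hmin⟩ := exists_minimalFor_of_wellFoundedLT
    (fun V : Finset (ℤ × ℤ) => V.card = W.card ∧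
      (hexNbhd (V : Set (ℤ × ℤ))).ncard ≤ (hexNbhd (W : Set (ℤ × ℤ))).ncard)
    (pairEnergy hexNormSq) ⟨W, rfl, le_rfl⟩
  refine ⟨V, V.finite_toSet, ?_, hnbhd, fun i => .of_no_gap ?_⟩
  · rw [Set.ncard_coe_finset, Set.ncard_coe_finset, hcard]
  · rintro k hk _ ⟨a, ha, rfl⟩ hak _ ⟨b, hb, rfl⟩ hkb
    obtain ⟨V', hcard', hnbhd', hlt⟩ :=
      exists_pairEnergy_lt_of_gap ha hb hak hkb fun w hw hwk => hk ⟨w, hw, hwk⟩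
    exact hlt.not_ge (hmin ⟨hcard'.trans hcard, hnbhd'.trans hnbhd⟩ hlt.le)
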